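/- arXiv:2412.20809 — 2 statements merged into one kernel-verified Lean document; each statement's English description precedes it below -/
import Mathlib

section
/- Let n ≥ 2 and 1 ≤ j ≤ n − 1. The map λ ↦ λ' (erasing the first column of the Young diagram) is a bijection from the set A_j = {symplectic partitions λ of 2n with 2n − p(λ) = j} onto the set of all orthogonal partitions of j (including the partition (1^j)), and for all λ, μ ∈ A_j one has λ ⊴ μ in the dominance order if and only if λ' ⊴ μ'. (Hence the subposet Υ_j of nilpotent Sp_{2n}-orbits is isomorphic, as a poset under closure order, to the poset of all nilpotent orbits of so_j.) -/
noncomputable section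

/-- A partition of `n`, represented as an antitone function `ℕ → ℕ` (the parts in weakly
decreasing order, padded by zeros), vanishing from index `n` on and summing to `n`. -/
def IsPartitionOf (n : ℕ) (f : ℕ → ℕ) : Prop :=
  Antitone f ∧ f n = 0 ∧ ∑ i ∈ Finset.range n, f i = n

/-- The number of (nonzero) parts of a partition of `n`. -/
def numParts (n : ℕ) (f : ℕ → ℕ) : ℕ :=
  ((Finset.range n).filter (fun i => f i ≠ 0)).card

/-- The multiplicity of `m` as a part of a partition of `n`. -/
def multPart (n : ℕ) (f : ℕ → ℕ) (m : ℕ) : ℕ :=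
  ((Finset.range n).filter (fun i => f i = m)).card

/-- A symplectic partition of `n`: every odd part occurs with even multiplicity. -/
def SymplecticPartition (n : ℕ) (f : ℕ → ℕ) : Prop :=
  IsPartitionOf n f ∧ ∀ m : ℕ, Odd m → Even (multPart n f m)

/-- An orthogonal partition of `n`: every (nonzero) even part occurs with even
multiplicity. -/
def OrthogonalPartition (n : ℕ) (f : ℕ → ℕ) : Prop :=
  IsPartitionOf n f ∧ ∀ m : ℕ, 0 < m → Even m → Even (multPart n f m)

/-- The dominance order on partitions. -/
def Dominates (f g : ℕ → ℕ) : Prop :=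
  ∀ m : ℕ, ∑ i ∈ Finset.range m, f i ≤ ∑ i ∈ Finset.range m, g i

/-- Erasing the first column of the Young diagram. -/
def eraseCol (f : ℕ → ℕ) : ℕ → ℕ := fun i => f i - 1

/-!
Erasing the first column lowers every part by one, so the multiplicity of a part `m ≥ 1` of `λ'` is
that of `m + 1` in `λ`: orthogonality of `λ'` is the symplectic condition on the parts `≥ 2` of
`λ`. The condition on the part `1` is then automatic, since the parts of `λ` have an even sum. The
inverse map adds a column of length `p = 2n - j`, and its result has exactly `p` parts as soon as
the orthogonal partition has at most `p`; for `j ≤ n` every partition of `j` qualifies. For `λ, μ`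
with `p` parts, the `m`-th partial sums exceed those of `λ'` and `μ'` by the same amount
`min m p`, so dominance is unchanged.
-/

lemma numParts_le (n : ℕ) (f : ℕ → ℕ) : numParts n f ≤ n :=
  (Finset.card_filter_le _ _).trans_eq (Finset.card_range n)

lemma sum_range_eq_sum_multPart_mul (n : ℕ) (f : ℕ → ℕ) :
    ∑ i ∈ Finset.range n, f i = ∑ m ∈ (Finset.range n).image f, multPart n f m * m :=
  Finset.sum_comp id f

lemma multPart_eq_zero_iff {n m : ℕ} {f : ℕ → ℕ} :
    multPart n f m = 0 ↔ m ∉ (Finset.range n).image f := by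
  simp [multPart, Finset.filter_eq_empty_iff]

lemma even_multPart_of_even_sum {n k : ℕ} {f : ℕ → ℕ} (hk : Odd k)
    (hsum : Even (∑ i ∈ Finset.range n, f i))
    (hmult : ∀ m, Odd m → m ≠ k → Even (multPart n f m)) : Even (multPart n f k) := by
  by_cases hmem : k ∈ (Finset.range n).image f
  · rw [sum_range_eq_sum_multPart_mul, ← Finset.add_sum_erase _ _ hmem] at hsum
    have hrest : Even (∑ m ∈ ((Finset.range n).image f).erase k, multPart n f m * m) := by
      refine Finset.even_sum _ fun m hm => ?_
      obtain heven | hodd := Nat.even_or_odd m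
      · exact heven.mul_left _
      · exact (hmult m hodd (Finset.ne_of_mem_erase hm)).mul_right _
    have hterm : Even (multPart n f k * k) := (Nat.even_add.1 hsum).2 hrest
    exact (Nat.even_mul.1 hterm).resolve_right (Nat.not_even_iff_odd.2 hk)
  · rw [multPart_eq_zero_iff.2 hmem]
    exact Even.zero

namespace IsPartitionOf

variable {n : ℕ} {f : ℕ → ℕ}

lemma eq_zero_of_le (hf : IsPartitionOf n f) {i : ℕ} (hi : n ≤ i) : f i = 0 :=
  Nat.eq_zero_of_le_zero (hf.2.1 ▸ hf.1 hi)

lemma sum_range_of_le (hf : IsPartitionOf n f) {N : ℕ} (hN : n ≤ N) :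
    ∑ i ∈ Finset.range N, f i = n :=
  (Finset.eventually_constant_sum (fun _ => hf.eq_zero_of_le) hN).trans hf.2.2

lemma multPart_of_le (hf : IsPartitionOf n f) {N m : ℕ} (hN : n ≤ N) (hm : m ≠ 0) :
    multPart N f m = multPart n f m := by
  unfold multPart
  congr 1
  ext i
  have hzero : n ≤ i → f i = 0 := hf.eq_zero_of_le
  simp only [Finset.mem_filter, Finset.mem_range]
  omega

lemma of_sum_range {N : ℕ} (hf : Antitone f) (hN : f N = 0)
    (hsum : ∑ i ∈ Finset.range N, f i = n) : IsPartitionOf n f := by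
  have hvanish : ∀ {k i}, f k = 0 → k ≤ i → f i = 0 := fun hk hi =>
    Nat.eq_zero_of_le_zero (hk ▸ hf hi)
  have hn : f n = 0 := by
    by_contra hpos
    have hlt : n < N := not_le.1 fun h => hpos (hvanish hN h)
    have hone_le : ∀ i ∈ Finset.range (n + 1), 1 ≤ f i := fun i hi =>
      (Nat.one_le_iff_ne_zero.2 hpos).trans (hf (Finset.mem_range_succ_iff.1 hi))
    refine Nat.not_succ_le_self n ?_
    calc n + 1 = ∑ i ∈ Finset.range (n + 1), 1 := by simp
      _ ≤ ∑ i ∈ Finset.range (n + 1), f i := Finset.sum_le_sum hone_le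
      _ ≤ ∑ i ∈ Finset.range N, f i := Finset.sum_le_sum_of_subset (Finset.range_mono hlt)
      _ = n := hsum
  refine ⟨hf, hn, ?_⟩
  calc ∑ i ∈ Finset.range n, f i = ∑ i ∈ Finset.range (max n N), f i :=
        (Finset.eventually_constant_sum (fun _ => hvanish hn) (le_max_left n N)).symm
    _ = ∑ i ∈ Finset.range N, f i :=
        Finset.eventually_constant_sum (fun _ => hvanish hN) (le_max_right n N)
    _ = n := hsum

lemma lt_numParts_iff (hf : IsPartitionOf n f) {i : ℕ} : i < numParts n f ↔ f i ≠ 0 := by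
  have hex : ∃ k, f k = 0 := ⟨n, hf.2.1⟩
  have hfind : ∀ i, i < Nat.find hex ↔ f i ≠ 0 := fun i => by
    rw [Nat.lt_find_iff]
    exact ⟨fun h => h i le_rfl, fun h k hk h0 => h (Nat.eq_zero_of_le_zero (h0 ▸ hf.1 hk))⟩
  have hsupport : (Finset.range n).filter (fun i => f i ≠ 0) = Finset.range (Nat.find hex) := by
    ext i
    have hle : Nat.find hex ≤ n := Nat.find_min' hex hf.2.1
    simp only [Finset.mem_filter, Finset.mem_range, ← hfind]
    omega
  rw [numParts, hsupport, Finset.card_range, hfind]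

lemma numParts_le_iff (hf : IsPartitionOf n f) {i : ℕ} : numParts n f ≤ i ↔ f i = 0 := by
  rw [← not_lt, hf.lt_numParts_iff, not_not]

end IsPartitionOf

/-- Adding a column of length `p` to a Young diagram: each of the first `p` parts, possibly zero,
grows by one. The result is a Young diagram for every `p`, and `addCol p` inverts `eraseCol` on the
diagrams with exactly `p` rows. -/
def addCol (p : ℕ) (g : ℕ → ℕ) : ℕ → ℕ := fun i => g i + if i < p then 1 else 0

lemma sum_range_addCol (p : ℕ) (g : ℕ → ℕ) (m : ℕ) :
    ∑ i ∈ Finset.range m, addCol p g i = ∑ i ∈ Finset.range m, g i + min m p := by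
  have hfilter : (Finset.range m).filter (· < p) = Finset.range (min m p) := by
    ext i
    simp
  simp only [addCol, Finset.sum_add_distrib, ← Finset.card_filter, hfilter, Finset.card_range]

lemma dominates_addCol_iff {p : ℕ} {f g : ℕ → ℕ} :
    Dominates (addCol p f) (addCol p g) ↔ Dominates f g := by
  simp only [Dominates, sum_range_addCol, add_le_add_iff_right]

namespace IsPartitionOf

variable {n : ℕ} {f : ℕ → ℕ}

lemma addCol_eraseCol (hf : IsPartitionOf n f) : addCol (numParts n f) (eraseCol f) = f := by
  funext i
  simp only [addCol, eraseCol, hf.lt_numParts_iff]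
  split_ifs <;> omega

lemma eraseCol_addCol (hf : IsPartitionOf n f) {p : ℕ} (hp : numParts n f ≤ p) :
    eraseCol (addCol p f) = f := by
  funext i
  have hzero : p ≤ i → f i = 0 := fun hi => hf.numParts_le_iff.1 (hp.trans hi)
  simp only [eraseCol, addCol]
  split_ifs <;> omega

lemma isPartitionOf_eraseCol (hf : IsPartitionOf n f) :
    IsPartitionOf (n - numParts n f) (eraseCol f) := by
  refine of_sum_range (N := n) (fun _ _ h => Nat.sub_le_sub_right (hf.1 h) 1) ?_ ?_
  · simp [eraseCol, hf.2.1]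
  · have hsum := sum_range_addCol (numParts n f) (eraseCol f) n
    rw [hf.addCol_eraseCol, hf.2.2, min_eq_right (numParts_le n f)] at hsum
    omega

lemma numParts_eraseCol_le (hf : IsPartitionOf n f) :
    numParts (n - numParts n f) (eraseCol f) ≤ numParts n f := by
  rw [hf.isPartitionOf_eraseCol.numParts_le_iff, eraseCol, hf.numParts_le_iff.1 le_rfl]

lemma isPartitionOf_addCol (hf : IsPartitionOf n f) (p : ℕ) :
    IsPartitionOf (n + p) (addCol p f) := by
  refine ⟨fun a b hab => ?_, ?_, ?_⟩
  · have hle := hf.1 hab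
    simp only [addCol]
    split_ifs <;> omega
  · simp [addCol, hf.eq_zero_of_le]
  · rw [sum_range_addCol, hf.sum_range_of_le (Nat.le_add_right n p),
      min_eq_right (Nat.le_add_left p n)]

lemma numParts_addCol (hf : IsPartitionOf n f) (p : ℕ) :
    numParts (n + p) (addCol p f) = max (numParts n f) p :=
  eq_of_forall_lt_iff fun i => by
    rw [(hf.isPartitionOf_addCol p).lt_numParts_iff, lt_max_iff, hf.lt_numParts_iff]
    simp [addCol, imp_iff_not_or]

lemma multPart_eraseCol (hf : IsPartitionOf n f) {m : ℕ} (hm : m ≠ 0) :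
    multPart (n - numParts n f) (eraseCol f) m = multPart n f (m + 1) := by
  rw [← hf.isPartitionOf_eraseCol.multPart_of_le (Nat.sub_le _ _) hm, multPart, multPart]
  congr! 2 with i
  simp only [eraseCol]
  omega

lemma symplecticPartition_iff_orthogonalPartition_eraseCol (hf : IsPartitionOf n f)
    (hn : Even n) :
    SymplecticPartition n f ↔ OrthogonalPartition (n - numParts n f) (eraseCol f) := by
  refine ⟨fun h => ⟨hf.isPartitionOf_eraseCol, fun m hm heven => ?_⟩, fun h => ⟨hf, ?_⟩⟩
  · rw [hf.multPart_eraseCol hm.ne']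
    exact h.2 _ heven.add_one
  · have hne_one : ∀ m, Odd m → m ≠ 1 → Even (multPart n f m) := by
      rintro _ ⟨k, rfl⟩ hk
      rw [← hf.multPart_eraseCol (by omega)]
      exact h.2 _ (by omega) (even_two_mul k)
    have hone : Even (multPart n f 1) :=
      even_multPart_of_even_sum odd_one (hf.2.2.symm ▸ hn) hne_one
    intro m hm
    obtain rfl | hm1 := eq_or_ne m 1
    · exact hone
    · exact hne_one m hm hm1

end IsPartitionOf

lemma OrthogonalPartition.symplecticPartition_addCol {n p : ℕ} {g : ℕ → ℕ}
    (hg : OrthogonalPartition n g) (hp : numParts n g ≤ p) (heven : Even (n + p)) :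
    SymplecticPartition (n + p) (addCol p g) := by
  rw [(hg.1.isPartitionOf_addCol p).symplecticPartition_iff_orthogonalPartition_eraseCol heven,
    hg.1.numParts_addCol, max_eq_right hp, hg.1.eraseCol_addCol hp, Nat.add_sub_cancel]
  exact hg

theorem stmt8_general (n j : ℕ) :
    Set.BijOn eraseCol
      {f | SymplecticPartition (2 * n) f ∧ 2 * n - numParts (2 * n) f = j}
      {g | OrthogonalPartition j g ∧ j + numParts j g ≤ 2 * n} ∧
    ∀ f ∈ {f : ℕ → ℕ | SymplecticPartition (2 * n) f ∧ 2 * n - numParts (2 * n) f = j},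
      ∀ g ∈ {f : ℕ → ℕ | SymplecticPartition (2 * n) f ∧ 2 * n - numParts (2 * n) f = j},
        (Dominates f g ↔ Dominates (eraseCol f) (eraseCol g)) := by
  have hnumParts : ∀ {f}, 2 * n - numParts (2 * n) f = j → numParts (2 * n) f = 2 * n - j := by
    grind [numParts_le]
  have hinv : ∀ {f}, SymplecticPartition (2 * n) f ∧ 2 * n - numParts (2 * n) f = j →
      addCol (2 * n - j) (eraseCol f) = f :=
    fun hf => hnumParts hf.2 ▸ hf.1.1.addCol_eraseCol
  refine ⟨Set.InvOn.bijOn (f' := addCol (2 * n - j))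
    ⟨fun f hf => hinv hf, fun g hg => ?_⟩ ?_ ?_, fun f hf g hg => ?_⟩
  · exact hg.1.1.eraseCol_addCol (Nat.le_sub_of_add_le' hg.2)
  · rintro f ⟨hf, rfl⟩
    refine ⟨(hf.1.symplecticPartition_iff_orthogonalPartition_eraseCol (even_two_mul n)).1 hf, ?_⟩
    have herase := hf.1.numParts_eraseCol_le
    have hparts := numParts_le (2 * n) f
    omega
  · rintro g ⟨hg, hle⟩
    obtain ⟨p, hp⟩ := Nat.exists_eq_add_of_le (le_of_add_le_left hle)
    have hgp : numParts j g ≤ p := by omega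
    simp only [Set.mem_ofPred_eq, hp, Nat.add_sub_cancel_left, hg.1.numParts_addCol,
      max_eq_right hgp, Nat.add_sub_cancel, and_true]
    exact hg.symplecticPartition_addCol hgp (hp ▸ even_two_mul n)
  · rw [← dominates_addCol_iff (p := 2 * n - j) (f := eraseCol f), hinv hf, hinv hg]

/-- For `n ≥ 2` and `1 ≤ j ≤ n − 1`, erasing the first column is a bijection from
`A_j = {symplectic λ ⊢ 2n : 2n − p(λ) = j}` onto the set of all orthogonal partitions
of `j`, and it preserves and reflects the dominance order on `A_j`. -/
theorem stmt8 (n j : ℕ) (hn : 2 ≤ n) (hj1 : 1 ≤ j) (hj : j ≤ n - 1) :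
    Set.BijOn eraseCol
      {f | SymplecticPartition (2 * n) f ∧ 2 * n - numParts (2 * n) f = j}
      {g | OrthogonalPartition j g} ∧
    ∀ f ∈ {f : ℕ → ℕ | SymplecticPartition (2 * n) f ∧ 2 * n - numParts (2 * n) f = j},
      ∀ g ∈ {f : ℕ → ℕ | SymplecticPartition (2 * n) f ∧ 2 * n - numParts (2 * n) f = j},
        (Dominates f g ↔ Dominates (eraseCol f) (eraseCol g)) := by
  have hroom (g : ℕ → ℕ) : j + numParts j g ≤ 2 * n := by grind [numParts_le j g]
  simpa only [hroom, and_true] using stmt8_general n j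
end
end

section
/- Let N ≥ 7 and let P be the set of orthogonal partitions λ of N satisfying λ₁ ≤ 2 or N − p(λ) < ⌊N/2⌋. Then the maximal elements of P with respect to the dominance order are exactly: (2m−1, 1^{2m+1}) and (2^{2m}) if N = 4m; (2m−1, 1^{2m+2}) and (2^{2m}, 1) if N = 4m+1; the single partition (2m+1, 1^{2m+1}) if N = 4m+2; and the single partition (2m+1, 1^{2m+2}) if N = 4m+3. (These are precisely the partitions of the maximal nilpotent SO_N-orbits O whose conical secant variety CS(O) is not all of so_N, i.e., whose secant variety is defective; for N = 4m the very even partition (2^{2m}) corresponds to two associated SO_N-orbits.) -/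
noncomputable section

/-- The maximal elements of a set of partitions with respect to the dominance order. -/
def maximalsIn (P : Set (ℕ → ℕ)) : Set (ℕ → ℕ) :=
  {f | f ∈ P ∧ ∀ g ∈ P, Dominates f g → f = g}

/-- The partition `(2^r)`. -/
def twoPow (r : ℕ) : ℕ → ℕ := fun i => if i < r then 2 else 0

/-- The partition `(2^r, 1)`. -/
def twoPowOne (r : ℕ) : ℕ → ℕ := fun i => if i < r then 2 else if i = r then 1 else 0

/-- The hook partition `(a, 1^b)`. -/
def hookPart (a b : ℕ) : ℕ → ℕ := fun i => if i = 0 then a else if i ≤ b then 1 else 0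

/-- The orthogonal partitions of `N` with `λ₁ ≤ 2` or `N − p(λ) < ⌊N/2⌋` (the nilpotent
`SO_N`-orbits with defective secant variety). -/
def defectiveSO (N : ℕ) : Set (ℕ → ℕ) :=
  {f | OrthogonalPartition N f ∧ (f 0 ≤ 2 ∨ N - numParts N f < N / 2)}

/-!
The rank `n - p(f) = ∑ (f i - 1)` of an orthogonal partition `f` of `n` is even, because the odd
summands come from the even parts. A partition of `a + b` is dominated by the hook `(a, 1^b)` as
soon as its rank is at most `a - 1`, and any partition with parts at most `c` is dominated by
`(c^q, r)`, where `n = c * q + r` with `r < c`.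

The largest even number below `⌊N/2⌋` is `⌊N/2⌋ - 1` or `⌊N/2⌋ - 2`, so the hook whose odd arm `a`
is `⌊N/2⌋` or `⌊N/2⌋ - 1` dominates all partitions of rank below `⌊N/2⌋`. Partitions with parts at
most `2` have rank at most `⌊N/2⌋`; they too lie below this hook when `⌊N/2⌋` is odd, whereas for
`⌊N/2⌋` even the orthogonal partition `(2^⌊N/2⌋)` or `(2^⌊N/2⌋, 1)` is a second maximal
element.
-/

open Finset

namespace Dominates

variable {f g h : ℕ → ℕ}

lemma trans (hfg : Dominates f g) (hgh : Dominates g h) : Dominates f h :=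
  fun k => (hfg k).trans (hgh k)

lemma antisymm (hfg : Dominates f g) (hgf : Dominates g f) : f = g := by
  have hsum (k : ℕ) : ∑ i ∈ range k, f i = ∑ i ∈ range k, g i := le_antisymm (hfg k) (hgf k)
  funext k
  simpa only [sum_range_succ, hsum k, Nat.add_left_cancel_iff] using hsum (k + 1)

lemma apply_zero_le (hfg : Dominates f g) : f 0 ≤ g 0 := by
  simpa only [sum_range_one] using hfg 1

end Dominates

lemma maximalsIn_eq_of_isAntichain {P S : Set (ℕ → ℕ)} (hS : IsAntichain Dominates S)
    (hSP : S ⊆ P) (hdom : ∀ f ∈ P, ∃ g ∈ S, Dominates f g) : maximalsIn P = S := by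
  ext f
  constructor
  · rintro ⟨hf, hmax⟩
    obtain ⟨g, hg, hfg⟩ := hdom f hf
    rwa [hmax g (hSP hg) hfg]
  · intro hf
    refine ⟨hSP hf, fun g hg hfg => ?_⟩
    obtain ⟨h, hh, hgh⟩ := hdom g hg
    obtain rfl : f = h := hS.eq hf hh (hfg.trans hgh)
    exact hfg.antisymm hgh

namespace IsPartitionOf

variable {n : ℕ} {f : ℕ → ℕ}

lemma lt_of_apply_ne_zero (hf : IsPartitionOf n f) {i : ℕ} (hi : f i ≠ 0) : i < n := by
  by_contra! hni
  exact hi (Nat.le_zero.1 (hf.2.1 ▸ hf.1 hni))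

lemma sum_range_le (hf : IsPartitionOf n f) (k : ℕ) : ∑ i ∈ range k, f i ≤ n :=
  calc ∑ i ∈ range k, f i ≤ ∑ i ∈ range n, f i :=
        sum_le_sum_of_ne_zero fun _ _ hi => mem_range.2 (hf.lt_of_apply_ne_zero hi)
    _ = n := hf.2.2

lemma sub_numParts_eq_sum (hf : IsPartitionOf n f) :
    n - numParts n f = ∑ i ∈ range n, (f i - 1) := by
  have hsum : ∑ i ∈ range n, f i = ∑ i ∈ range n, (f i - 1) + numParts n f := by
    rw [numParts, card_filter, ← sum_add_distrib]
    exact sum_congr rfl fun i _ => by split_ifs <;> omega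
  rw [hf.2.2] at hsum
  omega

lemma sum_range_le_add_sub_numParts (hf : IsPartitionOf n f) (k : ℕ) :
    ∑ i ∈ range k, f i ≤ k + (n - numParts n f) :=
  calc ∑ i ∈ range k, f i ≤ ∑ i ∈ range k, (1 + (f i - 1)) :=
        sum_le_sum fun _ _ => by omega
    _ = k + ∑ i ∈ range k, (f i - 1) := by simp [sum_add_distrib]
    _ ≤ k + ∑ i ∈ range n, (f i - 1) := by
        refine Nat.add_le_add_left (sum_le_sum_of_ne_zero fun i _ hi => ?_) k
        exact mem_range.2 (hf.lt_of_apply_ne_zero (by omega))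
    _ = k + (n - numParts n f) := by rw [hf.sub_numParts_eq_sum]

lemma sub_numParts_le_half (hf : IsPartitionOf n f) (h2 : f 0 ≤ 2) :
    n - numParts n f ≤ n / 2 := by
  have hdouble : 2 * ∑ i ∈ range n, (f i - 1) ≤ n :=
    calc 2 * ∑ i ∈ range n, (f i - 1) = ∑ i ∈ range n, 2 * (f i - 1) := mul_sum _ _ _
      _ ≤ ∑ i ∈ range n, f i := sum_le_sum fun i _ => by
          have := hf.1 (Nat.zero_le i)
          omega
      _ = n := hf.2.2
  rw [hf.sub_numParts_eq_sum]
  omega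

end IsPartitionOf

namespace OrthogonalPartition

variable {n : ℕ} {f : ℕ → ℕ}

lemma even_card_even_parts (hf : OrthogonalPartition n f) :
    Even #{i ∈ range n | f i ≠ 0 ∧ Even (f i)} := by
  rw [card_eq_sum_card_image f]
  refine even_sum _ fun m hm => ?_
  obtain ⟨i, hi, rfl⟩ := mem_image.1 hm
  obtain ⟨-, hne, hev⟩ := mem_filter.1 hi
  have hfiber : {j ∈ {j ∈ range n | f j ≠ 0 ∧ Even (f j)} | f j = f i} =
      {j ∈ range n | f j = f i} := by
    grind
  rw [hfiber]
  exact hf.2 (f i) (Nat.pos_of_ne_zero hne) hev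

lemma even_sub_numParts (hf : OrthogonalPartition n f) : Even (n - numParts n f) := by
  rw [hf.1.sub_numParts_eq_sum, even_sum_iff_even_card_odd]
  have hodd (k : ℕ) : Odd (k - 1) ↔ k ≠ 0 ∧ Even k := by grind
  simpa only [hodd] using hf.even_card_even_parts

end OrthogonalPartition

section Hook

variable {a b : ℕ}

lemma sum_range_succ_hookPart (a b k : ℕ) :
    ∑ i ∈ range (k + 1), hookPart a b i = a + min k b := by
  induction k with
  | zero => simp [hookPart]
  | succ k ih =>
    rw [sum_range_succ, ih]
    simp only [hookPart, Nat.add_eq_zero_iff, one_ne_zero, and_false, if_false]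
    split_ifs <;> omega

lemma isPartitionOf_hookPart (ha : 0 < a) : IsPartitionOf (a + b) (hookPart a b) := by
  refine ⟨fun i j hij => ?_, ?_, ?_⟩
  · simp only [hookPart]
    split_ifs <;> omega
  · simp only [hookPart]
    split_ifs <;> omega
  · obtain ⟨a, rfl⟩ := Nat.exists_eq_add_one.2 ha
    rw [Nat.add_right_comm, sum_range_succ_hookPart]
    omega

lemma sub_numParts_hookPart (ha : 0 < a) : a + b - numParts (a + b) (hookPart a b) = a - 1 := by
  rw [(isPartitionOf_hookPart ha).sub_numParts_eq_sum,
    sum_eq_single_of_mem 0 (mem_range.2 (by omega))]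
  · simp [hookPart]
  · intro i _ hi
    simp only [hookPart]
    split_ifs <;> omega

lemma orthogonalPartition_hookPart (ha : Odd a) :
    OrthogonalPartition (a + b) (hookPart a b) := by
  refine ⟨isPartitionOf_hookPart ha.pos, fun m hm hev => ?_⟩
  have hnone : multPart (a + b) (hookPart a b) m = 0 := by
    rw [multPart, card_eq_zero, filter_eq_empty_iff]
    intro i _
    simp only [hookPart]
    grind
  simp [hnone]

lemma hookPart_mem_defectiveSO (ha : Odd a) (hrank : a - 1 < (a + b) / 2) :
    hookPart a b ∈ defectiveSO (a + b) :=
  ⟨orthogonalPartition_hookPart ha, Or.inr ((sub_numParts_hookPart ha.pos).trans_lt hrank)⟩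

lemma IsPartitionOf.dominates_hookPart {f : ℕ → ℕ} (hf : IsPartitionOf (a + b) f)
    (hrank : a + b - numParts (a + b) f < a) : Dominates f (hookPart a b) := by
  rintro (_ | k)
  · simp
  · have hle := hf.sum_range_le (k + 1)
    have hle_rank := hf.sum_range_le_add_sub_numParts (k + 1)
    rw [sum_range_succ_hookPart]
    omega

lemma OrthogonalPartition.dominates_hookPart {f : ℕ → ℕ} (hf : OrthogonalPartition (a + b) f)
    (ha : Odd a) (hrank : a + b - numParts (a + b) f ≤ a) : Dominates f (hookPart a b) := by
  have hne : a + b - numParts (a + b) f ≠ a := fun h =>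
    Nat.not_even_iff_odd.2 ha (h ▸ hf.even_sub_numParts)
  exact hf.1.dominates_hookPart (hrank.lt_of_ne hne)

end Hook

/-- The partition `(c^q, r)` of `n = c * q + r`, with `r < c` and `0 < c`: the greatest partition
of `n` with all parts at most `c`. The parts are cut off greedily, so the truncated subtraction
produces both the remainder `r` and the padding by zeros. -/
def nearRectPart (c n : ℕ) : ℕ → ℕ := fun i => min c (n - c * i)

section NearRect

variable {c n : ℕ}

lemma twoPow_eq_nearRectPart (r : ℕ) : twoPow r = nearRectPart 2 (2 * r) := by
  funext i
  simp only [twoPow, nearRectPart]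
  split_ifs <;> omega

lemma twoPowOne_eq_nearRectPart (r : ℕ) : twoPowOne r = nearRectPart 2 (2 * r + 1) := by
  funext i
  simp only [twoPowOne, nearRectPart]
  split_ifs <;> omega

lemma sum_range_nearRectPart (c n k : ℕ) :
    ∑ i ∈ range k, nearRectPart c n i = min (c * k) n := by
  induction k with
  | zero => simp
  | succ k ih =>
    rw [sum_range_succ, ih, nearRectPart, Nat.mul_succ]
    omega

lemma isPartitionOf_nearRectPart (hc : 0 < c) : IsPartitionOf n (nearRectPart c n) := by
  have hn : n ≤ c * n := Nat.le_mul_of_pos_left n hc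
  refine ⟨fun i j hij => ?_, ?_, ?_⟩
  · exact min_le_min_left c (Nat.sub_le_sub_left (Nat.mul_le_mul_left c hij) n)
  · simp [nearRectPart, Nat.sub_eq_zero_of_le hn]
  · rw [sum_range_nearRectPart, min_eq_right hn]

lemma IsPartitionOf.dominates_nearRectPart {f : ℕ → ℕ} (hf : IsPartitionOf n f) (hc : f 0 ≤ c) :
    Dominates f (nearRectPart c n) := by
  intro k
  have hle : ∑ i ∈ range k, f i ≤ c * k := by
    simpa [mul_comm] using
      sum_le_card_nsmul (range k) f c fun i _ => (hf.1 (Nat.zero_le i)).trans hc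
  rw [sum_range_nearRectPart]
  exact le_min hle (hf.sum_range_le k)

lemma orthogonalPartition_nearRectPart_two (hn : Even (n / 2)) :
    OrthogonalPartition n (nearRectPart 2 n) := by
  refine ⟨isPartitionOf_nearRectPart two_pos, fun m hm hev => ?_⟩
  obtain rfl | hm2 := eq_or_ne m 2
  · have htwos : {i ∈ range n | nearRectPart 2 n i = 2} = range (n / 2) := by
      ext i
      rw [mem_filter, mem_range, mem_range, nearRectPart]
      omega
    rwa [multPart, htwos, card_range]
  · have hnone : multPart n (nearRectPart 2 n) m = 0 := by
      rw [multPart, card_eq_zero, filter_eq_empty_iff]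
      intro i _
      simp only [nearRectPart]
      grind
    simp [hnone]

lemma nearRectPart_two_mem_defectiveSO (hn : Even (n / 2)) :
    nearRectPart 2 n ∈ defectiveSO n :=
  ⟨orthogonalPartition_nearRectPart_two hn, Or.inl (min_le_left _ _)⟩

end NearRect

section Maximal

variable {a b : ℕ}

lemma isAntichain_hookPart_nearRectPart {c : ℕ} (hc : 2 ≤ c) (hca : c < a) (hab : a ≤ b) :
    IsAntichain Dominates {hookPart a b, nearRectPart c (a + b)} := by
  refine Set.pairwise_pair.2 fun _ => ⟨fun hdom => ?_, fun hdom => ?_⟩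
  · have hfirst : a ≤ c := hdom.apply_zero_le.trans (min_le_left _ _)
    omega
  · obtain ⟨k, rfl⟩ : ∃ k, a = k + 1 := Nat.exists_eq_add_one.2 (by omega)
    have hsum := hdom (k + 1)
    rw [sum_range_succ_hookPart, sum_range_nearRectPart] at hsum
    have hmul : 2 * (k + 1) ≤ c * (k + 1) := Nat.mul_le_mul_right _ hc
    omega

lemma maximalsIn_defectiveSO_eq_pair (ha : Odd a) (ha2 : 2 < a) (hab : (a + b) / 2 = a + 1) :
    maximalsIn (defectiveSO (a + b)) = {hookPart a b, nearRectPart 2 (a + b)} := by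
  refine maximalsIn_eq_of_isAntichain
    (isAntichain_hookPart_nearRectPart le_rfl ha2 (by omega)) ?_ ?_
  · exact Set.pair_subset (hookPart_mem_defectiveSO ha (by omega))
      (nearRectPart_two_mem_defectiveSO (hab ▸ ha.add_one))
  · rintro f ⟨hf, h2 | hrank⟩
    · exact ⟨_, Set.mem_insert_of_mem _ rfl, hf.1.dominates_nearRectPart h2⟩
    · exact ⟨_, Set.mem_insert _ _, hf.dominates_hookPart ha (by omega)⟩

lemma maximalsIn_defectiveSO_eq_singleton (ha : Odd a) (hab : (a + b) / 2 = a) :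
    maximalsIn (defectiveSO (a + b)) = {hookPart a b} := by
  have hpos := ha.pos
  refine maximalsIn_eq_of_isAntichain IsAntichain.singleton
    (Set.singleton_subset_iff.2 (hookPart_mem_defectiveSO ha (by omega))) ?_
  rintro f ⟨hf, hdef⟩
  have hrank : a + b - numParts (a + b) f ≤ (a + b) / 2 :=
    hdef.elim hf.1.sub_numParts_le_half le_of_lt
  exact ⟨_, rfl, hf.dominates_hookPart ha (hrank.trans_eq hab)⟩

end Maximal

/-- The maximal defective nilpotent `SO_N`-orbits: `(2m−1, 1^{2m+1})` and `(2^{2m})`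
for `N = 4m`; `(2m−1, 1^{2m+2})` and `(2^{2m}, 1)` for `N = 4m+1`;
`(2m+1, 1^{2m+1})` for `N = 4m+2`; `(2m+1, 1^{2m+2})` for `N = 4m+3`. -/
theorem stmt12 (N : ℕ) (hN : 7 ≤ N) :
    (∀ m : ℕ, N = 4 * m →
      maximalsIn (defectiveSO N) = {hookPart (2 * m - 1) (2 * m + 1), twoPow (2 * m)}) ∧
    (∀ m : ℕ, N = 4 * m + 1 →
      maximalsIn (defectiveSO N) = {hookPart (2 * m - 1) (2 * m + 2), twoPowOne (2 * m)}) ∧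
    (∀ m : ℕ, N = 4 * m + 2 →
      maximalsIn (defectiveSO N) = {hookPart (2 * m + 1) (2 * m + 1)}) ∧
    (∀ m : ℕ, N = 4 * m + 3 →
      maximalsIn (defectiveSO N) = {hookPart (2 * m + 1) (2 * m + 2)}) := by
  refine ⟨?_, ?_, ?_, ?_⟩
  · rintro m rfl
    have hodd : Odd (2 * m - 1) := ⟨m - 1, by omega⟩
    rw [twoPow_eq_nearRectPart, show 4 * m = 2 * m - 1 + (2 * m + 1) by omega,
      show 2 * (2 * m) = 2 * m - 1 + (2 * m + 1) by omega]
    exact maximalsIn_defectiveSO_eq_pair hodd (by omega) (by omega)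
  · rintro m rfl
    have hodd : Odd (2 * m - 1) := ⟨m - 1, by omega⟩
    rw [twoPowOne_eq_nearRectPart, show 4 * m + 1 = 2 * m - 1 + (2 * m + 2) by omega,
      show 2 * (2 * m) + 1 = 2 * m - 1 + (2 * m + 2) by omega]
    exact maximalsIn_defectiveSO_eq_pair hodd (by omega) (by omega)
  · rintro m rfl
    rw [show 4 * m + 2 = 2 * m + 1 + (2 * m + 1) by omega]
    exact maximalsIn_defectiveSO_eq_singleton (odd_two_mul_add_one m) (by omega)
  · rintro m rfl
    rw [show 4 * m + 3 = 2 * m + 1 + (2 * m + 2) by omega]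
    exact maximalsIn_defectiveSO_eq_singleton (odd_two_mul_add_one m) (by omega)
end
end
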